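/- arXiv:1602.03537 — 2 statements merged into one kernel-verified Lean document; each statement's English description precedes it below -/
import Mathlib

section
/- Let G ≅ H × K be a finite group which is the direct product of two groups H and K, where at least one of H and K has a proper non-trivial subgroup. Then γ(G) ≤ min{γ(H), γ(K)}, in the sense that if H (respectively K) has a dominating set of cardinality n for its intersection graph, then G has a dominating set of cardinality at most n for Γ(G). -/
/-- `D` is a dominating set of the intersection graph `Γ(G)` of the group `G`:
every member of `D` is a proper non-trivial subgroup of `G`, and every proper
non-trivial subgroup of `G` either belongs to `D` or intersects some member of
`D` non-trivially. -/
def IsDomSet {G : Type*} [Group G] (D : Set (Subgroup G)) : Prop :=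
  (∀ H ∈ D, H ≠ ⊥ ∧ H ≠ ⊤) ∧
    ∀ K : Subgroup G, K ≠ ⊥ → K ≠ ⊤ →
      K ∈ D ∨ ∃ W ∈ D, W ≠ K ∧ K ⊓ W ≠ ⊥

/-- The domination number `γ(G)`: the smallest cardinality of a dominating set
of the intersection graph `Γ(G)`. -/
noncomputable def domNumber (G : Type*) [Group G] : ℕ :=
  sInf {n : ℕ | ∃ D : Set (Subgroup G), IsDomSet D ∧ D.ncard = n}

/-!
Pull a dominating set `D` of `Γ(H)` back along a surjection `f : G →* H`. A non-trivial subgroup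
`L` of `G` whose image is trivial lies in `ker f`, hence in every pulled-back subgroup. Otherwise
the image of `L` is non-trivial, so it meets some member of `D` non-trivially, and then `L` meets
the preimage of that member. The theorem is the case of the two projections of `H × K`.
-/

section PullBack

variable {G H : Type*} [Group G] [Group H]

theorem map_inf_comap_eq (f : G →* H) (L : Subgroup G) (W : Subgroup H) :
    (L ⊓ W.comap f).map f = L.map f ⊓ W :=
  SetLike.coe_injective (Set.image_inter_preimage f L W)

theorem inf_comap_ne_bot_of_map_inf_ne_bot {f : G →* H} {L : Subgroup G} {W : Subgroup H}
    (h : L.map f ⊓ W ≠ ⊥) : L ⊓ W.comap f ≠ ⊥ := by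
  intro hbot
  rw [← map_inf_comap_eq, hbot, Subgroup.map_bot] at h
  exact h rfl

theorem comap_ne_bot_of_surjective {f : G →* H} (hf : Function.Surjective f) {W : Subgroup H}
    (hW : W ≠ ⊥) : W.comap f ≠ ⊥ := by
  intro hbot
  rw [← Subgroup.map_comap_eq_self_of_surjective hf W, hbot, Subgroup.map_bot] at hW
  exact hW rfl

theorem comap_ne_top_of_surjective {f : G →* H} (hf : Function.Surjective f) {W : Subgroup H}
    (hW : W ≠ ⊤) : W.comap f ≠ ⊤ :=
  (Subgroup.comap_injective hf).ne hW

theorem isDomSet_iff_forall_exists_inf_ne_bot {D : Set (Subgroup G)} :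
    IsDomSet D ↔ (∀ W ∈ D, W ≠ ⊥ ∧ W ≠ ⊤) ∧
      ∀ L : Subgroup G, L ≠ ⊥ → L ≠ ⊤ → ∃ W ∈ D, L ⊓ W ≠ ⊥ := by
  refine and_congr_right fun _ => forall₃_congr fun L hL _ => ⟨?_, ?_⟩
  · rintro (hLD | ⟨W, hWD, -, hLW⟩)
    · exact ⟨L, hLD, by rwa [inf_idem]⟩
    · exact ⟨W, hWD, hLW⟩
  · rintro ⟨W, hWD, hLW⟩
    obtain rfl | hne := eq_or_ne W L
    · exact Or.inl hWD
    · exact Or.inr ⟨W, hWD, hne, hLW⟩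

theorem IsDomSet.nonempty {D : Set (Subgroup G)} (hD : IsDomSet D)
    (hG : ∃ A : Subgroup G, A ≠ ⊥ ∧ A ≠ ⊤) : D.Nonempty := by
  obtain ⟨A, hbot, htop⟩ := hG
  obtain ⟨W, hWD, -⟩ := (isDomSet_iff_forall_exists_inf_ne_bot.mp hD).2 A hbot htop
  exact ⟨W, hWD⟩

theorem IsDomSet.exists_inf_ne_bot {D : Set (Subgroup G)} (hD : IsDomSet D) (hne : D.Nonempty)
    {L : Subgroup G} (hL : L ≠ ⊥) : ∃ W ∈ D, L ⊓ W ≠ ⊥ := by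
  obtain rfl | htop := eq_or_ne L ⊤
  · obtain ⟨W, hWD⟩ := hne
    exact ⟨W, hWD, by rw [top_inf_eq]; exact (hD.1 W hWD).1⟩
  · exact (isDomSet_iff_forall_exists_inf_ne_bot.mp hD).2 L hL htop

theorem IsDomSet.exists_inf_comap_ne_bot {D : Set (Subgroup H)} (hD : IsDomSet D)
    (hne : D.Nonempty) (f : G →* H) {L : Subgroup G} (hL : L ≠ ⊥) :
    ∃ W ∈ D, L ⊓ W.comap f ≠ ⊥ := by
  by_cases hmap : L.map f = ⊥
  · obtain ⟨W, hWD⟩ := hne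
    have hLW : L ≤ W.comap f :=
      ((Subgroup.map_eq_bot_iff L).mp hmap).trans (Subgroup.ker_le_comap f W)
    exact ⟨W, hWD, by rwa [inf_eq_left.mpr hLW]⟩
  · obtain ⟨W, hWD, hLW⟩ := hD.exists_inf_ne_bot hne hmap
    exact ⟨W, hWD, inf_comap_ne_bot_of_map_inf_ne_bot hLW⟩

theorem IsDomSet.image_comap {D : Set (Subgroup H)} (hD : IsDomSet D) (hne : D.Nonempty)
    {f : G →* H} (hf : Function.Surjective f) : IsDomSet (Subgroup.comap f '' D) := by
  rw [isDomSet_iff_forall_exists_inf_ne_bot, Set.forall_mem_image]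
  refine ⟨fun W hWD => ?_, fun L hL _ => ?_⟩
  · obtain ⟨hbot, htop⟩ := hD.1 W hWD
    exact ⟨comap_ne_bot_of_surjective hf hbot, comap_ne_top_of_surjective hf htop⟩
  · rw [Set.exists_mem_image]
    exact hD.exists_inf_comap_ne_bot hne f hL

end PullBack

theorem domNumber_prod_le_min_general {G H : Type*} [Group G] [Group H] {f : G →* H}
    (hf : Function.Surjective f) (hH : ∃ A : Subgroup H, A ≠ ⊥ ∧ A ≠ ⊤)
    {D : Set (Subgroup H)} (hD : IsDomSet D) :
    ∃ D' : Set (Subgroup G), IsDomSet D' ∧ D'.encard = D.encard :=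
  ⟨Subgroup.comap f '' D, hD.image_comap (hD.nonempty hH) hf,
    (Subgroup.comap_injective hf).encard_image D⟩

/-- For a finite direct product `H × K`: if `H` (respectively `K`) has a proper
non-trivial subgroup and `D` is a dominating set of `Γ(H)` (resp. of `Γ(K)`) of
cardinality `n`, then `Γ(H × K)` has a dominating set of cardinality at most `n`.
Hence `γ(H × K) ≤ min {γ(H), γ(K)}`. -/
theorem domNumber_prod_le_min {H K : Type*} [Group H] [Group K] [Finite H] [Finite K]
    (hHK : (∃ A : Subgroup H, A ≠ ⊥ ∧ A ≠ ⊤) ∨ (∃ B : Subgroup K, B ≠ ⊥ ∧ B ≠ ⊤)) :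
    (∀ D : Set (Subgroup H), (∃ A : Subgroup H, A ≠ ⊥ ∧ A ≠ ⊤) → IsDomSet D →
      ∃ D' : Set (Subgroup (H × K)), IsDomSet D' ∧ D'.ncard ≤ D.ncard) ∧
    (∀ D : Set (Subgroup K), (∃ B : Subgroup K, B ≠ ⊥ ∧ B ≠ ⊤) → IsDomSet D →
      ∃ D' : Set (Subgroup (H × K)), IsDomSet D' ∧ D'.ncard ≤ D.ncard) :=
  ⟨fun _ hH hD => (domNumber_prod_le_min_general (f := .fst H K) Prod.fst_surjective hH hD).imp
      fun _ => And.imp_right fun hcard => (congrArg ENat.toNat hcard).le,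
    fun _ hK hD => (domNumber_prod_le_min_general (f := .snd H K) Prod.snd_surjective hK hD).imp
      fun _ => And.imp_right fun hcard => (congrArg ENat.toNat hcard).le⟩
end

section
/- Let G be a finite abelian group having at least one proper non-trivial subgroup, and let p be a prime number. Then γ(G) = p + 1 if and only if sfp(G) = exp(G) = p (equivalently, G is an elementary abelian p-group of rank at least 2). -/
/-!
A dominating set must meet every subgroup of prime order, hence contain it in one of its members.
So for a torsion group the dominating sets are the families of proper non-trivial subgroups that
together contain all elements of prime order.

Let `G` be finite abelian. If `exp(G)` is not prime, take a prime `q` dividing it: the kernel of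
`x ↦ x ^ q` contains the elements of order `q`, its range contains the elements of every other
prime order, and both are proper and non-trivial, so `γ(G) ≤ 2 < p + 1`. If `exp(G) = p` is prime,
a dominating set is a cover of `G` by proper subgroups. Such subgroups have index at least `p`, and
as they share the identity, `p` of them are too few. On the other hand `G` is an `𝔽_p`-vector space
of dimension at least `2`, so it maps onto `𝔽_p²`, and the preimages of the `p + 1` lines cover it.
-/

section Group

variable {G : Type*} [Group G]

theorem domNumber_le_ncard {D : Set (Subgroup G)} (hD : IsDomSet D) : domNumber G ≤ D.ncard :=
  Nat.sInf_le ⟨D, hD, rfl⟩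

variable (G) in
theorem exists_isDomSet_ncard_eq_domNumber :
    ∃ D : Set (Subgroup G), IsDomSet D ∧ D.ncard = domNumber G :=
  Nat.sInf_mem
    (s := {n : ℕ | ∃ D : Set (Subgroup G), IsDomSet D ∧ D.ncard = n})
    ⟨_, {H | H ≠ ⊥ ∧ H ≠ ⊤}, ⟨fun _ hH ↦ hH, fun _ hK hK' ↦ .inl ⟨hK, hK'⟩⟩, rfl⟩

theorem nontrivial_of_exists_ne_bot_ne_top (hG : ∃ K : Subgroup G, K ≠ ⊥ ∧ K ≠ ⊤) :
    Nontrivial G := by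
  obtain ⟨K, hK, -⟩ := hG
  obtain ⟨x, -, hx⟩ := K.bot_or_exists_ne_one.resolve_left hK
  exact nontrivial_of_ne x 1 hx

theorem exists_mem_prime_orderOf (hG : IsMulTorsion G) {K : Subgroup G} (hK : K ≠ ⊥) :
    ∃ x ∈ K, (orderOf x).Prime := by
  obtain ⟨y, hyK, hy⟩ := K.bot_or_exists_ne_one.resolve_left hK
  obtain ⟨q, hq, hqy⟩ := Nat.exists_prime_and_dvd (orderOf_eq_one_iff.not.mpr hy)
  refine ⟨y ^ (orderOf y / q), K.pow_mem hyK _, ?_⟩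
  rwa [orderOf_pow_orderOf_div (hG y).orderOf_pos.ne' hqy]

theorem zpowers_le_of_inf_ne_bot {x : G} (hx : (orderOf x).Prime) {W : Subgroup G}
    (hW : Subgroup.zpowers x ⊓ W ≠ ⊥) : Subgroup.zpowers x ≤ W := by
  have : Fact (Nat.card (Subgroup.zpowers x)).Prime := ⟨by rwa [Nat.card_zpowers]⟩
  rcases (W.subgroupOf (Subgroup.zpowers x)).eq_bot_or_eq_top_of_prime_card with h | h
  · exact absurd (Subgroup.subgroupOf_eq_bot.mp h).symm.eq_bot hW
  · exact Subgroup.subgroupOf_eq_top.mp h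

theorem zpowers_ne_top_of_prime_orderOf (hG : ∃ K : Subgroup G, K ≠ ⊥ ∧ K ≠ ⊤) {x : G}
    (hx : (orderOf x).Prime) : Subgroup.zpowers x ≠ ⊤ := by
  intro htop
  obtain ⟨K, hK, hK'⟩ := hG
  have hmeet : Subgroup.zpowers x ⊓ K ≠ ⊥ := by rwa [htop, top_inf_eq]
  exact hK' (top_le_iff.mp (htop ▸ zpowers_le_of_inf_ne_bot hx hmeet))

theorem IsDomSet.exists_mem_of_prime_orderOf {D : Set (Subgroup G)} (hD : IsDomSet D)
    (hG : ∃ K : Subgroup G, K ≠ ⊥ ∧ K ≠ ⊤) {x : G} (hx : (orderOf x).Prime) :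
    ∃ W ∈ D, x ∈ W := by
  have hbot : Subgroup.zpowers x ≠ ⊥ :=
    Subgroup.zpowers_ne_bot.mpr (orderOf_eq_one_iff.not.mp hx.ne_one)
  rcases hD.2 _ hbot (zpowers_ne_top_of_prime_orderOf hG hx) with hmem | ⟨W, hWD, -, hmeet⟩
  · exact ⟨_, hmem, Subgroup.mem_zpowers x⟩
  · exact ⟨W, hWD, zpowers_le_of_inf_ne_bot hx hmeet (Subgroup.mem_zpowers x)⟩

theorem isDomSet_of_forall_prime_orderOf (hG : IsMulTorsion G) {D : Set (Subgroup G)}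
    (hD : ∀ H ∈ D, H ≠ ⊥ ∧ H ≠ ⊤) (hmem : ∀ x : G, (orderOf x).Prime → ∃ W ∈ D, x ∈ W) :
    IsDomSet D := by
  refine ⟨hD, fun K hK _ ↦ or_iff_not_imp_left.mpr fun hKD ↦ ?_⟩
  obtain ⟨x, hxK, hx⟩ := exists_mem_prime_orderOf hG hK
  obtain ⟨W, hWD, hxW⟩ := hmem x hx
  refine ⟨W, hWD, ne_of_mem_of_not_mem hWD hKD, fun hmeet ↦ hx.ne_one ?_⟩
  exact orderOf_eq_one_iff.mpr (Subgroup.mem_bot.mp (hmeet ▸ Subgroup.mem_inf.mpr ⟨hxK, hxW⟩))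

theorem primeFactors_card_eq_primeFactors_exponent [Finite G] :
    (Nat.card G).primeFactors = (Monoid.exponent G).primeFactors := by
  refine subset_antisymm (fun q hq ↦ ?_)
    (Nat.primeFactors_mono Group.exponent_dvd_nat_card Nat.card_pos.ne')
  have hq' : q.Prime := Nat.prime_of_mem_primeFactors hq
  have : Fact q.Prime := ⟨hq'⟩
  obtain ⟨x, rfl⟩ := exists_prime_orderOf_dvd_card' q (Nat.dvd_of_mem_primeFactors hq)
  exact Nat.mem_primeFactors.mpr
    ⟨hq', Monoid.order_dvd_exponent x, Monoid.exponent_ne_zero_of_finite⟩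

end Group

section Cover

open scoped Pointwise

variable {G : Type*} [Group G]

-- Neumann's lemma bounds the sum of the inverse indices below by `1`, and equality forces the
-- members of finite index to be disjoint, whereas they all contain the identity.
theorem lt_ncard_of_biUnion_eq_univ {D : Set (Subgroup G)} {n : ℕ} (hn : 1 < n)
    (hD : D.Finite) (hindex : ∀ H ∈ D, H.FiniteIndex → n ≤ H.index)
    (hcover : ⋃ H ∈ D, (H : Set G) = Set.univ) : n < D.ncard := by
  classical
  by_contra! hcard
  lift D to Finset (Subgroup G) using hD
  rw [Set.ncard_coe_finset] at hcard
  have hcosets : ⋃ H ∈ D, (1 : G) • (H : Set G) = Set.univ := by simpa using hcover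
  have hinv : ∀ H ∈ D, (H.index : ℚ)⁻¹ ≤ (n : ℚ)⁻¹ := by
    intro H hH
    by_cases hfin : H.FiniteIndex
    · exact inv_anti₀ (by positivity) (by exact_mod_cast hindex H hH hfin)
    · rw [Subgroup.not_finiteIndex_iff.mp hfin]
      simp
  have hsum : ∑ H ∈ D, (H.index : ℚ)⁻¹ = 1 := by
    refine le_antisymm ?_ (Subgroup.one_le_sum_inv_index_of_leftCoset_cover hcosets)
    calc ∑ H ∈ D, (H.index : ℚ)⁻¹ ≤ D.card * (n : ℚ)⁻¹ := by
          simpa using Finset.sum_le_card_nsmul D _ _ hinv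
      _ ≤ n * (n : ℚ)⁻¹ := by gcongr
      _ = 1 := mul_inv_cancel₀ (by positivity)
  have hdisj := Subgroup.pairwiseDisjoint_leftCoset_cover_of_sum_inv_index_eq_one hcosets hsum
  obtain ⟨H, hH, hfin⟩ := Subgroup.exists_finiteIndex_of_leftCoset_cover hcosets
  have hunique : ∀ K ∈ D, K.FiniteIndex → K = H := fun K hK hKfin ↦
    hdisj.elim_set (by simp [hK, hKfin]) (by simp [hH, hfin]) 1 (by simp [K.one_mem])
      (by simp [H.one_mem])
  have htop : H = ⊤ := by
    refine (Subgroup.eq_top_iff' H).mpr fun x ↦ ?_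
    have hx := Set.eq_univ_iff_forall.mp (Subgroup.leftCoset_cover_filter_FiniteIndex hcosets) x
    simp only [Finset.mem_filter, one_smul, Set.mem_iUnion, SetLike.mem_coe, exists_prop] at hx
    obtain ⟨K, ⟨hK, hKfin⟩, hxK⟩ := hx
    exact hunique K hK hKfin ▸ hxK
  exact hn.not_ge (Subgroup.index_eq_one.mpr htop ▸ hindex H hH hfin)

theorem le_index_of_isPGroup {p : ℕ} [Fact p.Prime] (hG : IsPGroup p G) {H : Subgroup G}
    [H.FiniteIndex] (hH : H ≠ ⊤) : p ≤ H.index := by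
  obtain ⟨n, hn⟩ := hG.index H
  have hn0 : n ≠ 0 := by
    rintro rfl
    exact hH (Subgroup.index_eq_one.mp (by rw [hn, pow_zero]))
  exact hn ▸ Nat.le_self_pow hn0 p

theorem IsDomSet.biUnion_eq_univ_of_prime_exponent {D : Set (Subgroup G)} (hD : IsDomSet D)
    (hG : ∃ K : Subgroup G, K ≠ ⊥ ∧ K ≠ ⊤) (hexp : (Monoid.exponent G).Prime) :
    ⋃ H ∈ D, (H : Set G) = Set.univ := by
  have : Nontrivial G := nontrivial_of_exists_ne_bot_ne_top hG
  have hmem : ∀ x : G, x ≠ 1 → ∃ W ∈ D, x ∈ W := fun x hx ↦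
    hD.exists_mem_of_prime_orderOf hG
      ((Monoid.exponent_eq_prime_iff hexp).mp rfl x hx ▸ hexp)
  refine Set.eq_univ_of_forall fun x ↦ Set.mem_iUnion₂.mpr ?_
  by_cases hx : x = 1
  · obtain ⟨y, hy⟩ := exists_ne (1 : G)
    obtain ⟨W, hWD, -⟩ := hmem y hy
    exact ⟨W, hWD, hx ▸ W.one_mem⟩
  · obtain ⟨W, hWD, hxW⟩ := hmem x hx
    exact ⟨W, hWD, hxW⟩

theorem IsDomSet.exponent_lt_ncard {D : Set (Subgroup G)} (hD : IsDomSet D) (hfin : D.Finite)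
    (hG : ∃ K : Subgroup G, K ≠ ⊥ ∧ K ≠ ⊤) (hexp : (Monoid.exponent G).Prime) :
    Monoid.exponent G < D.ncard := by
  have : Fact (Monoid.exponent G).Prime := ⟨hexp⟩
  have hpGroup : IsPGroup (Monoid.exponent G) G := fun x ↦
    ⟨1, by rw [pow_one, Monoid.pow_exponent_eq_one]⟩
  exact lt_ncard_of_biUnion_eq_univ hexp.one_lt hfin
    (fun H hH _ ↦ le_index_of_isPGroup hpGroup (hD.1 H hH).2)
    (hD.biUnion_eq_univ_of_prime_exponent hG hexp)

end Cover

section VectorSpace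

open scoped LinearAlgebra.Projectivization

variable {F V W : Type*} [Field F] [AddCommGroup V] [Module F V] [AddCommGroup W] [Module F W]

theorem exists_surjective_of_one_lt_rank (hV : 1 < Module.rank F V) :
    ∃ φ : V →ₗ[F] (Fin 2 → F), Function.Surjective φ := by
  obtain ⟨ι, hι⟩ : ∃ ι : (Fin 2 → F) →ₗ[F] V, Function.Injective ι := by
    rw [← lift_rank_le_iff_exists_linearMap, rank_fin_fun]
    simpa using Cardinal.two_le_iff_one_lt.mpr hV
  obtain ⟨φ, hφ⟩ := ι.exists_leftInverse_of_injective (LinearMap.ker_eq_bot.mpr hι)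
  exact ⟨φ, fun w ↦ ⟨ι w, LinearMap.congr_fun hφ w⟩⟩

theorem projectivization_submodule_ne_bot (ℓ : ℙ F W) : ℓ.submodule ≠ ⊥ :=
  Submodule.one_le_finrank_iff.mp ℓ.finrank_submodule.ge

theorem projectivization_submodule_ne_top (hW : 1 < Module.finrank F W) (ℓ : ℙ F W) :
    ℓ.submodule ≠ ⊤ := by
  intro htop
  have hline := ℓ.finrank_submodule
  rw [htop, finrank_top] at hline
  exact hW.ne' hline

theorem exists_mem_projectivization_submodule [Nontrivial W] (w : W) :
    ∃ ℓ : ℙ F W, w ∈ ℓ.submodule := by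
  by_cases hw : w = 0
  · exact ⟨Classical.arbitrary _, hw ▸ zero_mem _⟩
  · exact ⟨.mk F w hw, Submodule.mem_span_singleton_self w⟩

theorem exists_submodule_cover_of_one_lt_rank (hV : 1 < Module.rank F V) :
    ∃ U : ℙ F (Fin 2 → F) → Submodule F V,
      (∀ ℓ, U ℓ ≠ ⊥ ∧ U ℓ ≠ ⊤) ∧ ∀ v, ∃ ℓ, v ∈ U ℓ := by
  obtain ⟨φ, hφ⟩ := exists_surjective_of_one_lt_rank hV
  have hplane : 1 < Module.finrank F (Fin 2 → F) := by simp
  refine ⟨fun ℓ ↦ ℓ.submodule.comap φ, fun ℓ ↦ ?_,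
    fun v ↦ exists_mem_projectivization_submodule (φ v)⟩
  have hmap := Submodule.map_comap_eq_of_surjective hφ ℓ.submodule
  refine ⟨fun (hbot : ℓ.submodule.comap φ = ⊥) ↦ projectivization_submodule_ne_bot ℓ ?_,
    fun (htop : ℓ.submodule.comap φ = ⊤) ↦ projectivization_submodule_ne_top hplane ℓ ?_⟩
  · rw [← hmap, hbot, Submodule.map_bot]
  · rw [← hmap, htop, Submodule.map_top, LinearMap.range_eq_top.mpr hφ]

theorem one_lt_rank_of_exists_ne_bot_ne_top (hV : ∃ U : Submodule F V, U ≠ ⊥ ∧ U ≠ ⊤) :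
    1 < Module.rank F V := by
  obtain ⟨U, hU, hU'⟩ := hV
  have : Nontrivial U := U.nontrivial_iff_ne_bot.mpr hU
  have : Nontrivial (V ⧸ U) := Submodule.Quotient.nontrivial_iff.mpr hU'
  rw [← Cardinal.two_le_iff_one_lt, ← one_add_one_eq_two, ← U.rank_quotient_add_rank]
  exact add_le_add (Cardinal.one_le_iff_pos.mpr rank_pos) (Cardinal.one_le_iff_pos.mpr rank_pos)

end VectorSpace

section CommGroup

open scoped LinearAlgebra.Projectivization

variable {G : Type*} [CommGroup G]

theorem mem_range_powMonoidHom_of_coprime {x : G} {n : ℕ}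
    (h : n.Coprime (orderOf x)) : x ∈ (powMonoidHom n : G →* G).range := by
  obtain ⟨m, hm⟩ := exists_pow_eq_self_of_coprime h
  exact ⟨x ^ m, by rw [powMonoidHom_apply, pow_right_comm, hm]⟩

variable [Finite G]

theorem domNumber_le_of_zmod_module (p : ℕ) [Fact p.Prime] [Module (ZMod p) (Additive G)]
    (hG : ∃ K : Subgroup G, K ≠ ⊥ ∧ K ≠ ⊤) : domNumber G ≤ p + 1 := by
  let e : Subgroup G ≃o Submodule (ZMod p) (Additive G) :=
    Subgroup.toAddSubgroup.trans (AddSubgroup.toZModSubmodule p)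
  have hrank : 1 < Module.rank (ZMod p) (Additive G) := by
    obtain ⟨K, hK, hK'⟩ := hG
    exact one_lt_rank_of_exists_ne_bot_ne_top
      ⟨e K, (map_eq_bot_iff e).not.mpr hK, (map_eq_top_iff e).not.mpr hK'⟩
  obtain ⟨U, hproper, hcover⟩ := exists_submodule_cover_of_one_lt_rank hrank
  have hdom : IsDomSet (Set.range fun ℓ ↦ e.symm (U ℓ)) := by
    refine isDomSet_of_forall_prime_orderOf isMulTorsion_of_finite ?_ fun x _ ↦ ?_
    · rintro _ ⟨ℓ, rfl⟩
      exact ⟨(map_eq_bot_iff e.symm).not.mpr (hproper ℓ).1,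
        (map_eq_top_iff e.symm).not.mpr (hproper ℓ).2⟩
    · obtain ⟨ℓ, hxℓ⟩ := hcover (Additive.ofMul x)
      exact ⟨e.symm (U ℓ), Set.mem_range_self ℓ, hxℓ⟩
  calc domNumber G ≤ (Set.range fun ℓ ↦ e.symm (U ℓ)).ncard := domNumber_le_ncard hdom
    _ ≤ Nat.card (ℙ (ZMod p) (Fin 2 → ZMod p)) := Finite.card_range_le _
    _ = p + 1 := by
      rw [Projectivization.card_of_finrank_two _ _ (Module.finrank_fin_fun _), Nat.card_zmod]

theorem domNumber_le_exponent_add_one (hG : ∃ K : Subgroup G, K ≠ ⊥ ∧ K ≠ ⊤)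
    (hexp : (Monoid.exponent G).Prime) : domNumber G ≤ Monoid.exponent G + 1 := by
  have : Fact (Monoid.exponent G).Prime := ⟨hexp⟩
  let : Module (ZMod (Monoid.exponent G)) (Additive G) :=
    AddCommGroup.zmodModule (Monoid.pow_exponent_eq_one (G := G))
  exact domNumber_le_of_zmod_module (Monoid.exponent G) hG

theorem domNumber_eq_exponent_add_one (hG : ∃ K : Subgroup G, K ≠ ⊥ ∧ K ≠ ⊤)
    (hexp : (Monoid.exponent G).Prime) : domNumber G = Monoid.exponent G + 1 := by
  refine le_antisymm (domNumber_le_exponent_add_one hG hexp) ?_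
  obtain ⟨D, hD, hcard⟩ := exists_isDomSet_ncard_eq_domNumber G
  exact hcard ▸ hD.exponent_lt_ncard D.toFinite hG hexp

theorem isDomSet_ker_range_powMonoidHom {q : ℕ} (hq : q.Prime) (hdvd : q ∣ Monoid.exponent G)
    (hne : Monoid.exponent G ≠ q) :
    IsDomSet {(powMonoidHom q : G →* G).ker, (powMonoidHom q : G →* G).range} := by
  set f : G →* G := powMonoidHom q
  have hf_ne_one : f ≠ 1 := fun h ↦ hne <| dvd_antisymm
    (Monoid.exponent_dvd_of_forall_pow_eq_one (DFunLike.congr_fun h)) hdvd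
  have hker : f.ker ≠ ⊥ := by
    have : Fact q.Prime := ⟨hq⟩
    obtain ⟨y, hy⟩ :=
      exists_prime_orderOf_dvd_card' (G := G) q (hdvd.trans Group.exponent_dvd_nat_card)
    have hy_mem : y ∈ f.ker := orderOf_dvd_iff_pow_eq_one.mp hy.dvd
    have hy_ne : y ≠ 1 := orderOf_eq_one_iff.not.mp (hy ▸ hq.ne_one)
    exact fun hbot ↦ hy_ne (Subgroup.mem_bot.mp (hbot ▸ hy_mem))
  have hrange : f.range ≠ ⊤ := by
    rwa [Ne, MonoidHom.range_eq_top, ← Finite.injective_iff_surjective, ← f.ker_eq_bot_iff]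
  refine isDomSet_of_forall_prime_orderOf isMulTorsion_of_finite ?_ fun x hx ↦ ?_
  · rintro H (rfl | rfl)
    · exact ⟨hker, MonoidHom.ker_eq_top_iff.not.mpr hf_ne_one⟩
    · exact ⟨MonoidHom.range_eq_bot_iff.not.mpr hf_ne_one, hrange⟩
  · by_cases hxq : orderOf x = q
    · exact ⟨f.ker, .inl rfl, orderOf_dvd_iff_pow_eq_one.mp hxq.dvd⟩
    · exact ⟨f.range, .inr rfl, mem_range_powMonoidHom_of_coprime
        ((Nat.coprime_primes hq hx).mpr (Ne.symm hxq))⟩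

theorem domNumber_le_two_of_not_prime_exponent [Nontrivial G]
    (hexp : ¬ (Monoid.exponent G).Prime) : domNumber G ≤ 2 := by
  obtain ⟨q, hq, hdvd⟩ := Nat.exists_prime_and_dvd (Monoid.one_lt_exponent (G := G)).ne'
  have hne : Monoid.exponent G ≠ q := fun h ↦ hexp (h ▸ hq)
  exact (domNumber_le_ncard (isDomSet_ker_range_powMonoidHom hq hdvd hne)).trans
    ((Set.ncard_insert_le _ _).trans_eq (by rw [Set.ncard_singleton]))

end CommGroup

/-- A finite abelian group `G` with a proper non-trivial subgroup satisfies
`γ(G) = p + 1` for a prime `p` iff both the square-free part of `|G|` and the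
exponent of `G` are equal to `p`. -/
theorem abelian_domNumber_eq_succ_prime_iff {G : Type*} [CommGroup G] [Finite G]
    (hG : ∃ K : Subgroup G, K ≠ ⊥ ∧ K ≠ ⊤) {p : ℕ} (hp : p.Prime) :
    domNumber G = p + 1 ↔
      ((∏ q ∈ (Nat.card G).primeFactors, q) = p ∧ Monoid.exponent G = p) := by
  have : Nontrivial G := nontrivial_of_exists_ne_bot_ne_top hG
  constructor
  · intro hdom
    have hexp : (Monoid.exponent G).Prime := by
      by_contra hexp
      have hle := domNumber_le_two_of_not_prime_exponent hexp
      have hp2 := hp.two_le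
      omega
    have hexp_eq : Monoid.exponent G = p :=
      Nat.succ_injective ((domNumber_eq_exponent_add_one hG hexp).symm.trans hdom)
    rw [primeFactors_card_eq_primeFactors_exponent, hexp_eq, hp.primeFactors]
    exact ⟨Finset.prod_singleton _ _, rfl⟩
  · rintro ⟨-, rfl⟩
    exact domNumber_eq_exponent_add_one hG hp
end
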